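/- There exist universal constants C, C' ≥ 1 such that the following holds for every ε ∈ (0,1/2). Let P be a PBD with Var[P] ≤ ε^{−C'}, let σ̃ ∈ [√(Var[P])/2, 2√(Var[P]) + 1], and let μ̃ ∈ ℝ satisfy |E[P] − μ̃| ≤ σ̃. Let M = ⌈C·(log(1/ε) + σ̃·√(log(1/ε)))⌉ and ℓ = ⌈C·log(1/ε)⌉, and let h_ξ ∈ ℂ for integers |ξ| ≤ ℓ satisfy Σ_{|ξ|≤ℓ} |h_ξ − P̂(ξ)|² < ε²/16, where P̂ is the DFT of P modulo M. Fix positive integer multiplicities m_1,…,m_k and closed intervals [a_1,b_1],…,[a_k,b_k] ⊆ [0,1], each equal to the closure of one of the intervals I_i or J_i of the partition of [0,1] defined from ε and Var[P] as in the paper's structural theorem, or to [0,0] or [1,1]. Then there exist real polynomials G_1,…,G_s in the k variables q_1,…,q_k, with s ≤ C·log(1/ε) and each G_j of total degree at most C·log(1/ε), such that: (i) if there exists a PBD Q whose distinct parameters are q_i ∈ [a_i,b_i] with multiplicity m_i (1 ≤ i ≤ k) and no others, with dTV(P,Q) < ε/ℓ, E[Q] = E[P], and Var[P]/2 ≤ Var[Q]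 ≤ Var[P], then (q_1,…,q_k) satisfies G_j(q) ≥ 0 for all 1 ≤ j ≤ s; and (ii) every point (q_1,…,q_k) ∈ ∏_i [a_i,b_i] with G_j(q) ≥ 0 for all 1 ≤ j ≤ s is such that the PBD Q with parameter q_i of multiplicity m_i (1 ≤ i ≤ k) satisfies dTV(P,Q) < ε/2. -/

import Mathlib

/-!
The system consists of five polynomials. Write `L = log (1/ε)` and `V = Var[P]`; the constants are
`C = 10000`, `C' = C₁ = 1`.

*Few frequencies matter.* Let `M` be about `16 √(L · max V L)`. By Chernoff's bound (`pbd_tail`) a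
PBD with the mean of `P` and variance at most `V` has mass at most `2 ε⁷` outside a window of
length less than `M` around the mean, so Fourier inversion modulo `M` (`sum_abs_le_dft`) bounds
the `ℓ¹` distance of two such PBDs by the `ℓ¹` distance of their Fourier transforms, up to a
multiple of `ε⁷`. The characteristic function of a PBD `Q` at the angle `θ` is at most
`exp (-Var[Q] (1 - cos θ))` (`pbd_char_decay`). Hence, if `V/2 ≤ Var[Q] ≤ V`, the frequencies with
`V (1 - cos θ) > 20 L` contribute at most `2 M ε¹⁰`, which is negligible since `V ≤ 1/ε`; this is
`sum_abs_sub_le`. Only `O(L)` frequencies remain (`card_freq_le`).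

*Polynomial approximation at the remaining frequencies.* On each interval of the partition the
parameter stays on one side of `1/2`. Reflect the parameters above `1/2` and factor out the phase
determined by the mean. What remains is a product of factors `(1 + r z) exp (-r i Im z)`, where
`z = e^{∓ iθ} - 1` and `r ≤ 1/2` is `q` or `1 - q`. Replacing `r` by `w r` with a formal complex
variable `w` gives an entire function of `w` whose `N`-th Taylor coefficient is a polynomial in
the `q i` of degree at most `N` (`HasPolySeries`). The bound `|(1 + u) e^{-u}| ≤ e^{|u|²/2}` shows
that this function is at most `e^{O(L)}` on `|w| = 3`, so by Cauchy's estimate the Taylor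
polynomial of degree `O(L)` at `w = 1` is accurate to within `2 ε⁸⁰` (`char_approx`).

*The system* (`exists_system`). Two polynomials express equality of the means, two the variance
bounds, and the last one says that the sum over the remaining frequencies of the squared distance
between the truncated characteristic function of `Q` and that of `P` is small. A `Q` with
`dTV(P,Q) < ε/ℓ` satisfies the last condition because there are only `O(L)` frequencies, and
conversely Cauchy–Schwarz turns that condition into an `ℓ¹` bound, hence into `dTV(P,Q) < ε/2`.
-/

open scoped Classical

/-- The pmf of the Poisson binomial distribution with parameter vector `p`. -/
noncomputable def pbdPmf {ι : Type*} [Fintype ι] [DecidableEq ι] (p : ι → ℝ) (k : ℕ) : ℝ :=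
  ∑ S ∈ Finset.univ.powerset.filter (fun S : Finset ι => S.card = k),
    (∏ i ∈ S, p i) * ∏ i ∈ Sᶜ, (1 - p i)

/-- Mean of a PBD with parameter vector `p`. -/
noncomputable def pbdMean {ι : Type*} [Fintype ι] (p : ι → ℝ) : ℝ := ∑ i, p i

/-- Variance of a PBD with parameter vector `p`. -/
noncomputable def pbdVar {ι : Type*} [Fintype ι] (p : ι → ℝ) : ℝ := ∑ i, p i * (1 - p i)

/-- Total variation distance between two distributions on ℕ. -/
noncomputable def dTV (P Q : ℕ → ℝ) : ℝ := (1 / 2) * ∑' k : ℕ, |P k - Q k|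

/-- Discrete Fourier transform modulo `M` of a distribution on ℕ. -/
noncomputable def dft (P : ℕ → ℝ) (M : ℕ) (ξ : ℤ) : ℂ :=
  ∑' j : ℕ, (P j : ℂ) *
    Complex.exp (-2 * (Real.pi : ℂ) * Complex.I * (ξ : ℂ) * (j : ℂ) / (M : ℂ))

/-- The pmf of the PBD whose distinct parameters are `q i` with multiplicity `m i`. -/
noncomputable def pbdPmfMult {k : ℕ} (m : Fin k → ℕ) (q : Fin k → ℝ) (j : ℕ) : ℝ :=
  pbdPmf (fun x : (Σ i : Fin k, Fin (m i)) => q x.1) j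

/-! ### Generating function, tails and decay of the characteristic function -/

/-- The probability generating function of a PBD factors over its parameters. -/
lemma pbd_pgf {ι : Type*} [Fintype ι] [DecidableEq ι] (p : ι → ℝ) {N : ℕ}
    (hN : Fintype.card ι < N) (y : ℂ) :
    ∑ j ∈ Finset.range N, (pbdPmf p j : ℂ) * y ^ j = ∏ i, (1 + (p i : ℂ) * (y - 1)) := by
  have h1 : ∀ i, (1 + (p i : ℂ) * (y - 1)) = (p i : ℂ) * y + (1 - p i) := fun i => by ring
  simp_rw [h1]
  rw [Finset.prod_add]
  have hmaps : ∀ S ∈ (Finset.univ : Finset ι).powerset, S.card ∈ Finset.range N := by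
    intro S _
    exact Finset.mem_range.2 (lt_of_le_of_lt (Finset.card_le_univ S) hN)
  rw [← Finset.sum_fiberwise_of_maps_to hmaps]
  refine Finset.sum_congr rfl fun j _ => ?_
  unfold pbdPmf
  push_cast
  rw [Finset.sum_mul]
  refine Finset.sum_congr rfl fun S hS => ?_
  rw [Finset.prod_mul_distrib, Finset.prod_const, (Finset.mem_filter.1 hS).2,
    Finset.compl_eq_univ_sdiff]
  ring

lemma pbd_pgf_real {ι : Type*} [Fintype ι] [DecidableEq ι] (p : ι → ℝ) {N : ℕ}
    (hN : Fintype.card ι < N) (y : ℝ) :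
    ∑ j ∈ Finset.range N, pbdPmf p j * y ^ j = ∏ i, (1 + p i * (y - 1)) := by
  have h := pbd_pgf p hN (y : ℂ)
  exact_mod_cast h

lemma pbdPmf_nonneg {ι : Type*} [Fintype ι] [DecidableEq ι] {p : ι → ℝ}
    (hp : ∀ i, p i ∈ Set.Icc (0 : ℝ) 1) (j : ℕ) : 0 ≤ pbdPmf p j := by
  unfold pbdPmf
  refine Finset.sum_nonneg fun S _ => mul_nonneg ?_ ?_
  · exact Finset.prod_nonneg fun i _ => (hp i).1
  · exact Finset.prod_nonneg fun i _ => by linarith [(hp i).2]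

lemma pbdPmf_eq_zero {ι : Type*} [Fintype ι] [DecidableEq ι] (p : ι → ℝ) {j : ℕ}
    (hj : Fintype.card ι < j) : pbdPmf p j = 0 := by
  unfold pbdPmf
  apply Finset.sum_eq_zero
  intro S hS
  have h1 := (Finset.mem_filter.1 hS).2
  have h2 := Finset.card_le_univ S
  omega

/-- Centred moment generating function bound: each centred Bernoulli contributes at most
`1 + t² p (1 - p)`. -/
lemma pbd_mgf {ι : Type*} [Fintype ι] [DecidableEq ι] {p : ι → ℝ}
    (hp : ∀ i, p i ∈ Set.Icc (0 : ℝ) 1) {N : ℕ} (hN : Fintype.card ι < N) {t : ℝ}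
    (ht : |t| ≤ 1) :
    ∑ j ∈ Finset.range N, pbdPmf p j * Real.exp (t * (j - pbdMean p)) ≤
      Real.exp (t ^ 2 * pbdVar p) := by
  have h1 : ∀ j : ℕ, pbdPmf p j * Real.exp (t * (j - pbdMean p)) =
      Real.exp (-(t * pbdMean p)) * (pbdPmf p j * Real.exp t ^ j) := by
    intro j
    rw [← Real.exp_nat_mul, mul_left_comm, ← Real.exp_add]
    congr 2
    ring
  simp_rw [h1]
  rw [← Finset.mul_sum, pbd_pgf_real p hN]
  unfold pbdMean pbdVar
  rw [Finset.mul_sum, Finset.mul_sum, ← Finset.sum_neg_distrib, Real.exp_sum, Real.exp_sum,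
    ← Finset.prod_mul_distrib]
  have hx : ∀ x : ℝ, |x| ≤ 1 → Real.exp x ≤ 1 + x + x ^ 2 := by
    intro x hx
    have := abs_le.1 (Real.abs_exp_sub_one_sub_id_le hx)
    linarith [this.2]
  refine Finset.prod_le_prod (fun i _ => ?_) (fun i _ => ?_)
  · have := (hp i).1
    have := (hp i).2
    have he := Real.exp_pos t
    have : 0 ≤ 1 + p i * (Real.exp t - 1) := by nlinarith
    positivity
  · obtain ⟨h0, h1⟩ := hp i
    have ha : |-(t * p i)| ≤ 1 := by
      rw [abs_neg, abs_mul, abs_of_nonneg h0]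
      nlinarith [abs_nonneg t]
    have hb : |t * (1 - p i)| ≤ 1 := by
      rw [abs_mul, abs_of_nonneg (sub_nonneg.2 h1)]
      nlinarith [abs_nonneg t]
    have ha' := hx _ ha
    have hb' := hx _ hb
    have hsplit : Real.exp (-(t * p i)) * (1 + p i * (Real.exp t - 1)) =
        (1 - p i) * Real.exp (-(t * p i)) + p i * Real.exp (t * (1 - p i)) := by
      have : Real.exp (t * (1 - p i)) = Real.exp (-(t * p i)) * Real.exp t := by
        rw [← Real.exp_add]; congr 1; ring
      rw [this]; ring
    rw [hsplit]
    have h3 : (1 - p i) * Real.exp (-(t * p i)) + p i * Real.exp (t * (1 - p i)) ≤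
        (1 - p i) * (1 + -(t * p i) + (-(t * p i)) ^ 2) +
          p i * (1 + t * (1 - p i) + (t * (1 - p i)) ^ 2) :=
      add_le_add (mul_le_mul_of_nonneg_left ha' (sub_nonneg.2 h1))
        (mul_le_mul_of_nonneg_left hb' h0)
    refine h3.trans ?_
    have h4 := Real.add_one_le_exp (t ^ 2 * (p i * (1 - p i)))
    refine le_trans (le_of_eq ?_) h4
    ring

/-- Two-sided Chernoff bound. -/
lemma pbd_tail {ι : Type*} [Fintype ι] [DecidableEq ι] {p : ι → ℝ}
    (hp : ∀ i, p i ∈ Set.Icc (0 : ℝ) 1) {N : ℕ} (hN : Fintype.card ι < N) {t a : ℝ}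
    (ht0 : 0 ≤ t) (ht : t ≤ 1) :
    ∑ j ∈ (Finset.range N).filter (fun j : ℕ => ¬ |(j : ℝ) - pbdMean p| < a), pbdPmf p j ≤
      2 * Real.exp (t ^ 2 * pbdVar p - t * a) := by
  have h1 := pbd_mgf hp hN (t := t) (by rwa [abs_of_nonneg ht0])
  have h2 := pbd_mgf hp hN (t := -t) (by rwa [abs_neg, abs_of_nonneg ht0])
  rw [neg_sq] at h2
  have h3 : ∑ j ∈ (Finset.range N).filter (fun j : ℕ => ¬ |(j : ℝ) - pbdMean p| < a), pbdPmf p j ≤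
      ∑ j ∈ Finset.range N, Real.exp (-(t * a)) *
        (pbdPmf p j * Real.exp (t * (j - pbdMean p)) +
          pbdPmf p j * Real.exp (-t * (j - pbdMean p))) := by
    rw [Finset.sum_filter]
    refine Finset.sum_le_sum fun j _ => ?_
    have hP := pbdPmf_nonneg hp j
    split_ifs with h
    · positivity
    · have hkey : 1 ≤ Real.exp (-(t * a)) *
          (Real.exp (t * (j - pbdMean p)) + Real.exp (-t * (j - pbdMean p))) := by
        rw [mul_add, ← Real.exp_add, ← Real.exp_add]
        rcases le_abs.1 (not_lt.1 h) with h' | h'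
        · have : 1 ≤ Real.exp (-(t * a) + t * (j - pbdMean p)) :=
            Real.one_le_exp (by nlinarith)
          linarith [Real.exp_pos (-(t * a) + -t * (j - pbdMean p))]
        · have : 1 ≤ Real.exp (-(t * a) + -t * (j - pbdMean p)) :=
            Real.one_le_exp (by nlinarith)
          linarith [Real.exp_pos (-(t * a) + t * (j - pbdMean p))]
      nlinarith
  refine h3.trans ?_
  rw [← Finset.mul_sum, Finset.sum_add_distrib, sub_eq_add_neg, Real.exp_add]
  have := Real.exp_pos (-(t * a))
  nlinarith

/-- Gaussian-type decay of the characteristic function of a PBD. -/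
lemma pbd_char_decay {ι : Type*} [Fintype ι] (p : ι → ℝ) (θ : ℝ) :
    ‖∏ i, (1 + (p i : ℂ) * (Complex.exp (-(θ * Complex.I)) - 1))‖ ≤
      Real.exp (-(pbdVar p * (1 - Real.cos θ))) := by
  rw [norm_prod]
  unfold pbdVar
  rw [Finset.sum_mul, ← Finset.sum_neg_distrib, Real.exp_sum]
  refine Finset.prod_le_prod (fun _ _ => norm_nonneg _) fun i _ => ?_
  rw [← abs_of_nonneg (norm_nonneg (1 + (p i : ℂ) * (Complex.exp (-(θ * Complex.I)) - 1))),
    ← abs_of_pos (Real.exp_pos (-(p i * (1 - p i) * (1 - Real.cos θ)))), ← sq_le_sq,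
    ← Complex.normSq_eq_norm_sq, ← Real.exp_nat_mul]
  have he : Complex.exp (-(θ * Complex.I)) = (Real.cos θ : ℂ) - Real.sin θ * Complex.I := by
    rw [← neg_mul, Complex.exp_mul_I]
    simp
    ring
  have h1 : Complex.normSq (1 + (p i : ℂ) * (Complex.exp (-(θ * Complex.I)) - 1)) =
      1 - 2 * (p i * (1 - p i) * (1 - Real.cos θ)) := by
    rw [he, Complex.normSq_apply]
    simp [Complex.cos_ofReal_re, Complex.sin_ofReal_re]
    linear_combination (p i) ^ 2 * Real.sin_sq_add_cos_sq θ
  rw [h1]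
  have := Real.add_one_le_exp (-(2 * (p i * (1 - p i) * (1 - Real.cos θ))))
  refine le_trans (by linarith) (this.trans (le_of_eq ?_))
  push_cast
  congr 1
  ring

/-! ### Fourier inversion modulo `M` on a window -/

lemma sum_root_zpow {M : ℕ} (hM : 0 < M) (n : ℤ) :
    ∑ ξ ∈ Finset.range M, Complex.exp (2 * Real.pi * Complex.I / M) ^ (n * (ξ : ℤ)) =
      if (M : ℤ) ∣ n then (M : ℂ) else 0 := by
  have hζ := Complex.isPrimitiveRoot_exp M hM.ne'
  set ζ := Complex.exp (2 * Real.pi * Complex.I / M) with hζdef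
  have h1 : ∀ ξ : ℕ, ζ ^ (n * (ξ : ℤ)) = (ζ ^ n) ^ ξ := by
    intro ξ
    rw [zpow_mul, zpow_natCast]
  simp_rw [h1]
  split_ifs with h
  · rw [(hζ.zpow_eq_one_iff_dvd n).2 h]
    simp
  · have hne : ζ ^ n ≠ 1 := fun h' => h ((hζ.zpow_eq_one_iff_dvd n).1 h')
    rw [geom_sum_eq hne]
    have : (ζ ^ n) ^ M = 1 := by
      rw [← zpow_natCast, ← zpow_mul, mul_comm, zpow_mul, zpow_natCast, hζ.pow_eq_one, one_zpow]
    rw [this]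
    simp

/-- Fourier inversion modulo `M` on a window of length less than `M`: outside mass is folded
into the window, so it is counted twice. -/
lemma sum_abs_le_dft (D : ℕ → ℝ) (N : ℕ) {M : ℕ} (hM : 0 < M) {μ a : ℝ} (ha : 2 * a < M) :
    ∑ j ∈ Finset.range N, |D j| ≤
      ∑ ξ ∈ Finset.range M, ‖∑ j ∈ Finset.range N, (D j : ℂ) *
        Complex.exp (-((2 * Real.pi * ξ / M : ℝ) * Complex.I)) ^ j‖ +
      2 * ∑ j ∈ (Finset.range N).filter (fun j : ℕ => ¬ |(j : ℝ) - μ| < a), |D j| := by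
  set W := (Finset.range N).filter (fun j : ℕ => |(j : ℝ) - μ| < a) with hW
  set E := (Finset.range N).filter (fun j : ℕ => ¬ |(j : ℝ) - μ| < a) with hE
  set ζ := Complex.exp (2 * Real.pi * Complex.I / M) with hζdef
  have hζ0 : ζ ≠ 0 := Complex.exp_ne_zero _
  have hζn : ‖ζ‖ = 1 := (Complex.isPrimitiveRoot_exp M hM.ne').norm'_eq_one hM.ne'
  set F : ℕ → ℂ := fun ξ => ∑ j ∈ Finset.range N, (D j : ℂ) *
        Complex.exp (-((2 * Real.pi * ξ / M : ℝ) * Complex.I)) ^ j with hF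
  have hpow : ∀ ξ j : ℕ, Complex.exp (-((2 * Real.pi * ξ / M : ℝ) * Complex.I)) ^ j =
      ζ ^ (-(j : ℤ) * (ξ : ℤ)) := by
    intro ξ j
    rw [hζdef, ← Complex.exp_int_mul, ← Complex.exp_nat_mul]
    congr 1
    push_cast
    ring
  have hinv : ∀ x : ℕ, ∑ ξ ∈ Finset.range M, F ξ * ζ ^ ((x : ℤ) * (ξ : ℤ)) =
      (M : ℂ) * ∑ y ∈ Finset.range N, if (M : ℤ) ∣ (x : ℤ) - y then (D y : ℂ) else 0 := by
    intro x
    simp only [hF, hpow, Finset.sum_mul, Finset.mul_sum]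
    rw [Finset.sum_comm]
    refine Finset.sum_congr rfl fun y _ => ?_
    have h1 : ∀ ξ : ℕ, (D y : ℂ) * ζ ^ (-(y : ℤ) * (ξ : ℤ)) * ζ ^ ((x : ℤ) * (ξ : ℤ)) =
        (D y : ℂ) * ζ ^ (((x : ℤ) - y) * (ξ : ℤ)) := by
      intro ξ
      rw [mul_assoc, ← zpow_add₀ hζ0]
      congr 2
      ring
    simp_rw [h1]
    rw [← Finset.mul_sum, sum_root_zpow hM]
    split_ifs <;> ring
  -- two points of the window that are congruent modulo `M` coincide
  have hinj : ∀ x ∈ W, ∀ y ∈ W, (M : ℤ) ∣ (x : ℤ) - y → x = y := by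
    intro x hx y hy hxy
    have h1 := abs_lt.1 (Finset.mem_filter.1 hx).2
    have h2 := abs_lt.1 (Finset.mem_filter.1 hy).2
    have h3 : |(x : ℤ) - y| < M := by
      have : |(x : ℝ) - y| < M := by
        rw [abs_lt]; constructor <;> linarith [h1.1, h1.2, h2.1, h2.2]
      exact_mod_cast this
    have := Int.eq_zero_of_abs_lt_dvd hxy h3
    omega
  have hcard : (W.card : ℝ) ≤ M := by
    have : W.card ≤ (Finset.range M).card := by
      refine Finset.card_le_card_of_injOn (fun x => x % M) ?_ ?_
      · intro x _
        simpa using Nat.mod_lt x hM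
      · intro x hx y hy hxy
        refine hinj x hx y hy ?_
        have h : x ≡ y [MOD M] := hxy
        exact (Nat.modEq_iff_dvd.1 h.symm)
    simpa using this
  have hMpos : (0 : ℝ) < M := by exact_mod_cast hM
  have hsplit : ∀ g : ℕ → ℝ, ∑ j ∈ Finset.range N, g j = ∑ j ∈ W, g j + ∑ j ∈ E, g j :=
    fun g => (Finset.sum_filter_add_sum_filter_not _ _ _).symm
  have hpt : ∀ x ∈ W, |D x| ≤ (∑ ξ ∈ Finset.range M, ‖F ξ‖) / M +
      ∑ y ∈ E, if (M : ℤ) ∣ (x : ℤ) - y then |D y| else 0 := by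
    intro x hx
    have hreal : ∑ y ∈ Finset.range N, (if (M : ℤ) ∣ (x : ℤ) - y then D y else 0) =
        D x + ∑ y ∈ E, if (M : ℤ) ∣ (x : ℤ) - y then D y else 0 := by
      rw [hsplit]
      congr 1
      rw [Finset.sum_eq_single_of_mem x hx]
      · simp
      · intro y hy hne
        rw [if_neg]
        exact fun h => hne (hinj x hx y hy h).symm
    have hn : (M : ℝ) * |D x + ∑ y ∈ E, if (M : ℤ) ∣ (x : ℤ) - y then D y else 0| ≤
        ∑ ξ ∈ Finset.range M, ‖F ξ‖ := by
      have h1 : ‖∑ ξ ∈ Finset.range M, F ξ * ζ ^ ((x : ℤ) * (ξ : ℤ))‖ ≤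
          ∑ ξ ∈ Finset.range M, ‖F ξ‖ := by
        refine (norm_sum_le _ _).trans (le_of_eq ?_)
        refine Finset.sum_congr rfl fun ξ _ => ?_
        rw [norm_mul, norm_zpow, hζn, one_zpow, mul_one]
      rw [hinv x] at h1
      have h2 : (∑ y ∈ Finset.range N, if (M : ℤ) ∣ (x : ℤ) - y then (D y : ℂ) else 0) =
          ((∑ y ∈ Finset.range N, if (M : ℤ) ∣ (x : ℤ) - y then D y else 0 : ℝ) : ℂ) := by
        rw [Complex.ofReal_sum]
        refine Finset.sum_congr rfl fun y _ => ?_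
        split_ifs <;> simp
      rw [h2, hreal, norm_mul, Complex.norm_real, Complex.norm_natCast, Real.norm_eq_abs] at h1
      exact h1
    have h3 : |∑ y ∈ E, if (M : ℤ) ∣ (x : ℤ) - y then D y else 0| ≤
        ∑ y ∈ E, if (M : ℤ) ∣ (x : ℤ) - y then |D y| else 0 := by
      refine (Finset.abs_sum_le_sum_abs _ _).trans (le_of_eq ?_)
      refine Finset.sum_congr rfl fun y _ => ?_
      split_ifs <;> simp
    have h4 : |D x + ∑ y ∈ E, if (M : ℤ) ∣ (x : ℤ) - y then D y else 0| ≤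
        (∑ ξ ∈ Finset.range M, ‖F ξ‖) / M := by
      rw [le_div_iff₀ hMpos]
      linarith
    have h5 := abs_sub (D x + ∑ y ∈ E, if (M : ℤ) ∣ (x : ℤ) - y then D y else 0)
      (∑ y ∈ E, if (M : ℤ) ∣ (x : ℤ) - y then D y else 0)
    rw [add_sub_cancel_right] at h5
    linarith
  have hsumW : ∑ x ∈ W, |D x| ≤ ∑ ξ ∈ Finset.range M, ‖F ξ‖ + ∑ y ∈ E, |D y| := by
    refine (Finset.sum_le_sum hpt).trans ?_
    rw [Finset.sum_add_distrib]
    refine add_le_add ?_ ?_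
    · rw [Finset.sum_const, nsmul_eq_mul]
      have h0 : 0 ≤ ∑ ξ ∈ Finset.range M, ‖F ξ‖ := Finset.sum_nonneg fun _ _ => norm_nonneg _
      calc (W.card : ℝ) * ((∑ ξ ∈ Finset.range M, ‖F ξ‖) / M)
          ≤ M * ((∑ ξ ∈ Finset.range M, ‖F ξ‖) / M) := by gcongr
        _ = _ := by field_simp
    · rw [Finset.sum_comm]
      refine Finset.sum_le_sum fun y _ => ?_
      rw [← Finset.sum_filter, Finset.sum_const, nsmul_eq_mul]
      have hc : (W.filter (fun x : ℕ => (M : ℤ) ∣ (x : ℤ) - y)).card ≤ 1 := by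
        rw [Finset.card_le_one]
        intro x hx x' hx'
        rw [Finset.mem_filter] at hx hx'
        refine hinj x hx.1 x' hx'.1 ?_
        have := dvd_sub hx.2 hx'.2
        simpa using this
      have hc' : ((W.filter (fun x : ℕ => (M : ℤ) ∣ (x : ℤ) - y)).card : ℝ) ≤ 1 := by
        exact_mod_cast hc
      nlinarith [abs_nonneg (D y)]
  rw [hsplit]
  linarith

/-! ### Power series with polynomial coefficients -/

/-- `g` is a complex-valued polynomial function of degree at most `d` on `ℝᵏ`, given by its
real and imaginary parts. -/
def PolyFn {k : ℕ} (d : ℕ) (g : (Fin k → ℝ) → ℂ) : Prop :=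
  ∃ A B : MvPolynomial (Fin k) ℝ, A.totalDegree ≤ d ∧ B.totalDegree ≤ d ∧
    ∀ q, g q = (MvPolynomial.eval q A : ℝ) + (MvPolynomial.eval q B : ℝ) * Complex.I

lemma PolyFn.mono {k d d' : ℕ} {g : (Fin k → ℝ) → ℂ} (h : PolyFn d g) (hd : d ≤ d') :
    PolyFn d' g := by
  obtain ⟨A, B, hA, hB, hg⟩ := h
  exact ⟨A, B, hA.trans hd, hB.trans hd, hg⟩

lemma PolyFn.const {k : ℕ} (d : ℕ) (z : ℂ) : PolyFn d (fun _ : Fin k → ℝ => z) :=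
  ⟨MvPolynomial.C z.re, MvPolynomial.C z.im, by simp, by simp, fun q => by simp⟩

lemma PolyFn.ofReal {k d : ℕ} {A : MvPolynomial (Fin k) ℝ} (hA : A.totalDegree ≤ d) :
    PolyFn d (fun q => ((MvPolynomial.eval q A : ℝ) : ℂ)) :=
  ⟨A, 0, hA, by simp, fun q => by simp⟩

lemma PolyFn.add {k d : ℕ} {g g' : (Fin k → ℝ) → ℂ} (h : PolyFn d g) (h' : PolyFn d g') :
    PolyFn d (fun q => g q + g' q) := by
  obtain ⟨A, B, hA, hB, hg⟩ := h
  obtain ⟨A', B', hA', hB', hg'⟩ := h'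
  refine ⟨A + A', B + B', (MvPolynomial.totalDegree_add _ _).trans (max_le hA hA'),
    (MvPolynomial.totalDegree_add _ _).trans (max_le hB hB'), fun q => ?_⟩
  show _ + _ = _
  rw [hg, hg']
  push_cast [map_add]
  ring

lemma PolyFn.mul {k d d' : ℕ} {g g' : (Fin k → ℝ) → ℂ} (h : PolyFn d g) (h' : PolyFn d' g') :
    PolyFn (d + d') (fun q => g q * g' q) := by
  obtain ⟨A, B, hA, hB, hg⟩ := h
  obtain ⟨A', B', hA', hB', hg'⟩ := h'
  refine ⟨A * A' - B * B', A * B' + B * A', ?_, ?_, fun q => ?_⟩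
  · refine (MvPolynomial.totalDegree_sub _ _).trans (max_le ?_ ?_)
    · exact (MvPolynomial.totalDegree_mul _ _).trans (add_le_add hA hA')
    · exact (MvPolynomial.totalDegree_mul _ _).trans (add_le_add hB hB')
  · refine (MvPolynomial.totalDegree_add _ _).trans (max_le ?_ ?_)
    · exact (MvPolynomial.totalDegree_mul _ _).trans (add_le_add hA hB')
    · exact (MvPolynomial.totalDegree_mul _ _).trans (add_le_add hB hA')
  · show _ * _ = _
    rw [hg, hg']
    push_cast [map_add, map_mul, map_sub]
    linear_combination ((MvPolynomial.eval q B : ℝ) * (MvPolynomial.eval q B' : ℝ) : ℂ) *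
      Complex.I_sq

lemma PolyFn.pow {k d : ℕ} {g : (Fin k → ℝ) → ℂ} (h : PolyFn d g) (n : ℕ) :
    PolyFn (n * d) (fun q => g q ^ n) := by
  induction n with
  | zero => simpa using PolyFn.const 0 1
  | succ n ih =>
    simp_rw [pow_succ]
    exact (ih.mul h).mono (by ring_nf; exact le_rfl)

lemma PolyFn.sum {k d : ℕ} {α : Type*} (s : Finset α) {g : α → (Fin k → ℝ) → ℂ}
    (h : ∀ x ∈ s, PolyFn d (g x)) : PolyFn d (fun q => ∑ x ∈ s, g x q) := by
  induction s using Finset.induction_on with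
  | empty => simpa using PolyFn.const d 0
  | insert a s ha ih =>
    simp_rw [Finset.sum_insert ha]
    exact (h a (by simp)).add (ih fun x hx => h x (by simp [hx]))

/-- `F q w` is entire in `w`, and its `N`-th Taylor coefficient at `0` is `c N q`, a polynomial
function of `q` of degree at most `N`. -/
def HasPolySeries {k : ℕ} (F : (Fin k → ℝ) → ℂ → ℂ) (c : ℕ → (Fin k → ℝ) → ℂ) : Prop :=
  (∀ N, PolyFn N (c N)) ∧
    ∀ q w, (Summable fun N => ‖c N q * w ^ N‖) ∧ ∑' N, c N q * w ^ N = F q w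

lemma HasPolySeries.mul {k : ℕ} {F F' : (Fin k → ℝ) → ℂ → ℂ} {c c' : ℕ → (Fin k → ℝ) → ℂ}
    (h : HasPolySeries F c) (h' : HasPolySeries F' c') :
    HasPolySeries (fun q w => F q w * F' q w)
      (fun N q => ∑ ab ∈ Finset.HasAntidiagonal.antidiagonal N, c ab.1 q * c' ab.2 q) := by
  refine ⟨fun N => ?_, fun q w => ?_⟩
  · refine PolyFn.sum _ fun ab hab => ?_
    have := (h.1 ab.1).mul (h'.1 ab.2)
    rwa [Finset.HasAntidiagonal.mem_antidiagonal.1 hab] at this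
  · have hc : ∀ N, (∑ ab ∈ Finset.HasAntidiagonal.antidiagonal N, c ab.1 q * c' ab.2 q) * w ^ N =
        ∑ ab ∈ Finset.HasAntidiagonal.antidiagonal N, (c ab.1 q * w ^ ab.1) * (c' ab.2 q * w ^ ab.2) := by
      intro N
      rw [Finset.sum_mul]
      refine Finset.sum_congr rfl fun ab hab => ?_
      rw [← Finset.HasAntidiagonal.mem_antidiagonal.1 hab, pow_add]
      ring
    simp_rw [hc]
    refine ⟨?_, ?_⟩
    · exact summable_norm_sum_mul_antidiagonal_of_summable_norm
        (f := fun N => c N q * w ^ N) (g := fun N => c' N q * w ^ N) (h.2 q w).1 (h'.2 q w).1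
    · have := tsum_mul_tsum_eq_tsum_sum_antidiagonal_of_summable_norm
        (f := fun N => c N q * w ^ N) (g := fun N => c' N q * w ^ N) (h.2 q w).1 (h'.2 q w).1
      rw [(h.2 q w).2, (h'.2 q w).2] at this
      exact this.symm

lemma hasPolySeries_one_add {k : ℕ} {g : (Fin k → ℝ) → ℂ} (hg : PolyFn 1 g) :
    HasPolySeries (fun q w => 1 + w * g q)
      (fun N q => if N = 0 then 1 else if N = 1 then g q else 0) := by
  have hz : ∀ q w, ∀ N ∉ Finset.range 2,
      (if N = 0 then (1 : ℂ) else if N = 1 then g q else 0) * w ^ N = 0 := by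
    intro q w N hN
    simp only [Finset.mem_range, not_lt] at hN
    rw [if_neg (by omega), if_neg (by omega), zero_mul]
  refine ⟨fun N => ?_, fun q w => ⟨?_, ?_⟩⟩
  · rcases N with _ | _ | N
    · simpa using PolyFn.const 0 1
    · simpa using hg
    · simpa using PolyFn.const _ 0
  · refine summable_of_ne_finset_zero (s := Finset.range 2) fun N hN => ?_
    rw [hz q w N hN, norm_zero]
  · rw [tsum_eq_sum (s := Finset.range 2) (hz q w)]
    simp [Finset.sum_range_succ, mul_comm]

lemma hasPolySeries_exp {k : ℕ} {g : (Fin k → ℝ) → ℂ} (hg : PolyFn 1 g) :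
    HasPolySeries (fun q w => Complex.exp (w * g q))
      (fun N q => ((N.factorial : ℂ))⁻¹ * g q ^ N) := by
  refine ⟨fun N => ?_, fun q w => ?_⟩
  · exact ((PolyFn.const 0 _).mul (hg.pow N)).mono (by simp)
  · have hc : ∀ N : ℕ, ((N.factorial : ℂ))⁻¹ * g q ^ N * w ^ N =
        ((N.factorial : ℂ))⁻¹ • (w * g q) ^ N := by
      intro N
      rw [smul_eq_mul, mul_pow]
      ring
    simp_rw [hc]
    refine ⟨NormedSpace.norm_expSeries_summable' (𝕂 := ℂ) (w * g q), ?_⟩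
    rw [Complex.exp_eq_exp_ℂ, NormedSpace.exp_eq_tsum ℂ]

lemma hasPolySeries_prod {k : ℕ} {α : Type*} (s : Finset α) {F : α → (Fin k → ℝ) → ℂ → ℂ}
    (h : ∀ x ∈ s, ∃ c, HasPolySeries (F x) c) :
    ∃ c, HasPolySeries (fun q w => ∏ x ∈ s, F x q w) c := by
  induction s using Finset.induction_on with
  | empty =>
    refine ⟨fun N _ => if N = 0 then 1 else if N = 1 then 0 else 0, ?_⟩
    have := hasPolySeries_one_add (k := k) (PolyFn.const 1 0)
    simpa only [mul_zero, add_zero, Finset.prod_empty] using this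
  | insert a s ha ih =>
    obtain ⟨c, hc⟩ := h a (by simp)
    obtain ⟨c', hc'⟩ := ih fun x hx => h x (by simp [hx])
    simp_rw [Finset.prod_insert ha]
    exact ⟨_, hc.mul hc'⟩

/-- Cauchy's estimate on the circle of radius `3`. -/
lemma HasPolySeries.coeff_le {k : ℕ} {F : (Fin k → ℝ) → ℂ → ℂ} {c : ℕ → (Fin k → ℝ) → ℂ}
    (h : HasPolySeries F c) (q : Fin k → ℝ) {b : ℝ} (hb : ∀ w : ℂ, ‖w‖ = 3 → ‖F q w‖ ≤ b)
    (N : ℕ) : ‖c N q‖ ≤ b / 3 ^ N := by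
  set p := FormalMultilinearSeries.ofScalars ℂ (fun N => c N q) with hp
  have hrad : p.radius = ⊤ := by
    refine FormalMultilinearSeries.radius_eq_top_of_summable_norm _ fun r => ?_
    refine (h.2 q (r : ℂ)).1.congr fun n => ?_
    rw [hp, FormalMultilinearSeries.ofScalars_norm, norm_mul, norm_pow]
    simp
  have hball : HasFPowerSeriesOnBall (F q) p 0 ⊤ := by
    refine ⟨by rw [hrad], by simp, fun {y} _ => ?_⟩
    have h1 := (h.2 q y).1.of_norm.hasSum
    rw [(h.2 q y).2] at h1
    rw [zero_add]
    refine h1.congr_fun ?_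
    intro n
    simp [hp, mul_comm]
  have hdiff : Differentiable ℂ (F q) := by
    intro y
    exact (hball.analyticAt_of_mem (by simp)).differentiableAt
  have hcauchy := Complex.norm_iteratedDeriv_le_of_forall_mem_sphere_norm_le (c := 0) (R := 3) N
    (by norm_num) hdiff.diffContOnCl (fun z hz => hb z (by simpa using hz))
  have hid := hball.factorial_smul (1 : ℂ) N
  rw [← iteratedDeriv_eq_iteratedFDeriv] at hid
  have hc : p N (fun _ => (1 : ℂ)) = c N q := by
    simp [hp]
  rw [hc, nsmul_eq_mul] at hid
  rw [← hid, norm_mul, Complex.norm_natCast, mul_div_assoc] at hcauchy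
  exact le_of_mul_le_mul_left hcauchy (by positivity)

lemma HasPolySeries.trunc {k : ℕ} {F : (Fin k → ℝ) → ℂ → ℂ} {c : ℕ → (Fin k → ℝ) → ℂ}
    (h : HasPolySeries F c) (q : Fin k → ℝ) {b : ℝ} (hb : ∀ w : ℂ, ‖w‖ = 3 → ‖F q w‖ ≤ b)
    (T : ℕ) : ‖F q 1 - ∑ N ∈ Finset.range T, c N q‖ ≤ 2 * b * Real.exp (-T) := by
  have hb0 : 0 ≤ b := (norm_nonneg _).trans (hb 3 (by simp))
  obtain ⟨hs, hF⟩ := h.2 q 1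
  simp only [one_pow, mul_one] at hs hF
  have htail : F q 1 - ∑ N ∈ Finset.range T, c N q = ∑' N, c (N + T) q := by
    rw [← hF, ← hs.of_norm.sum_add_tsum_nat_add T]
    ring
  rw [htail]
  have hgeo : HasSum (fun N : ℕ => b / 3 ^ T * (1 / 3 : ℝ) ^ N) (b / 3 ^ T * (1 - 1 / 3)⁻¹) :=
    (hasSum_geometric_of_lt_one (by norm_num) (by norm_num)).mul_left _
  have h1 : ‖∑' N, c (N + T) q‖ ≤ b / 3 ^ T * (1 - 1 / 3)⁻¹ := by
    refine tsum_of_norm_bounded hgeo fun N => ?_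
    refine (h.coeff_le q hb (N + T)).trans (le_of_eq ?_)
    rw [pow_add, div_pow, one_pow]
    field_simp
  refine h1.trans ?_
  have h2 : (1 : ℝ) / 3 ^ T ≤ Real.exp (-T) := by
    rw [Real.exp_neg, one_div]
    refine inv_anti₀ (Real.exp_pos _) ?_
    rw [← mul_one (T : ℝ), Real.exp_nat_mul]
    gcongr
    linarith [Real.exp_one_lt_d9]
  calc b / 3 ^ T * (1 - 1 / 3)⁻¹ = (3 / 2) * b * (1 / 3 ^ T) := by ring
    _ ≤ 2 * b * Real.exp (-T) := by gcongr; norm_num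

/-! ### Polynomial approximation of the characteristic function -/

/-- The genus-one Weierstrass factor bound `|(1 + u) e^{-u}| ≤ e^{|u|²/2}`. -/
lemma norm_one_add_mul_exp_neg_le (u : ℂ) :
    ‖(1 + u) * Complex.exp (-u)‖ ≤ Real.exp (‖u‖ ^ 2 / 2) := by
  rw [norm_mul, Complex.norm_exp, Complex.neg_re]
  have h1 : ‖1 + u‖ ≤ Real.exp (u.re + ‖u‖ ^ 2 / 2) := by
    refine abs_le_of_sq_le_sq' ?_ (Real.exp_pos _).le |>.2
    rw [← Complex.normSq_eq_norm_sq, ← Real.exp_nat_mul, ← Complex.normSq_eq_norm_sq]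
    have := Real.add_one_le_exp (2 * u.re + Complex.normSq u)
    have h2 : Complex.normSq (1 + u) = 2 * u.re + Complex.normSq u + 1 := by
      simp only [Complex.normSq_apply, Complex.add_re, Complex.add_im, Complex.one_re,
        Complex.one_im]
      ring
    rw [h2]
    refine this.trans (le_of_eq ?_)
    congr 1
    push_cast
    ring
  calc ‖1 + u‖ * Real.exp (-u.re) ≤ Real.exp (u.re + ‖u‖ ^ 2 / 2) * Real.exp (-u.re) := by gcongr
    _ = Real.exp (‖u‖ ^ 2 / 2) := by rw [← Real.exp_add]; congr 1; ring

/-- A centred Bernoulli factor of success probability `r ≤ 1/2`, with the formal variable `w`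
on the circle of radius `3`. -/
lemma factor_bound {r γ : ℝ} {v w : ℂ} (hr0 : 0 ≤ r) (hr : r ≤ 1 / 2) (hγ : 0 ≤ γ)
    (hv : ‖-(γ : ℂ) + v‖ ^ 2 = 2 * γ) (hw : ‖w‖ = 3) :
    ‖(1 + w * ((r : ℂ) * (-(γ : ℂ) + v))) * Complex.exp (w * ((r : ℂ) * (-v)))‖ ≤
      Real.exp (16 * γ * (r * (1 - r))) := by
  have h1 : (1 + w * ((r : ℂ) * (-(γ : ℂ) + v))) * Complex.exp (w * ((r : ℂ) * (-v))) =
      ((1 + w * ((r : ℂ) * (-(γ : ℂ) + v))) *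
        Complex.exp (-(w * ((r : ℂ) * (-(γ : ℂ) + v))))) * Complex.exp (-(w * (r * γ))) := by
    rw [mul_assoc, ← Complex.exp_add]
    congr 2
    ring
  rw [h1, norm_mul]
  have h2 := norm_one_add_mul_exp_neg_le (w * ((r : ℂ) * (-(γ : ℂ) + v)))
  have h3 : ‖w * ((r : ℂ) * (-(γ : ℂ) + v))‖ ^ 2 / 2 = 9 * r ^ 2 * γ := by
    rw [norm_mul, norm_mul, mul_pow, mul_pow, hv, hw, Complex.norm_real, Real.norm_eq_abs, sq_abs]
    ring
  have h4 : ‖Complex.exp (-(w * (r * γ)))‖ ≤ Real.exp (3 * r * γ) := by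
    rw [Complex.norm_exp]
    refine Real.exp_le_exp.2 ?_
    refine (Complex.re_le_norm _).trans (le_of_eq ?_)
    rw [norm_neg, norm_mul, hw, norm_mul, Complex.norm_real, Complex.norm_real,
      Real.norm_of_nonneg hr0, Real.norm_of_nonneg hγ]
    ring
  rw [h3] at h2
  calc _ ≤ Real.exp (9 * r ^ 2 * γ) * Real.exp (3 * r * γ) := by gcongr
    _ = Real.exp (γ * (r * (9 * r + 3))) := by rw [← Real.exp_add]; congr 1; ring
    _ ≤ Real.exp (γ * (r * (16 * (1 - r)))) := by gcongr; linarith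
    _ = _ := by congr 1; ring

/-- Low-degree polynomial approximation of the characteristic function of a PBD with prescribed
multiplicities and prescribed mean `μ`, on the region where each parameter lies on a known side
of `1/2`. The parameters above `1/2` are reflected, the first-order (mean) phase is factored out,
and the remaining product, with a formal variable `w` attached to each parameter, is truncated as
a power series in `w`. -/
lemma char_approx {k : ℕ} (m : Fin k → ℕ) (small : Fin k → Prop) (θ μ : ℝ) (T : ℕ) :
    ∃ τ : (Fin k → ℝ) → ℂ, PolyFn T τ ∧ ∀ q : Fin k → ℝ,
      (∀ i, q i ∈ Set.Icc (0 : ℝ) 1) → (∀ i, small i → q i ≤ 1 / 2) →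
      (∀ i, ¬ small i → 1 / 2 ≤ q i) → ∑ i, (m i : ℝ) * q i = μ →
      ‖∏ x : (Σ i : Fin k, Fin (m i)), (1 + (q x.1 : ℂ) * (Complex.exp (-(θ * Complex.I)) - 1)) -
        τ q‖ ≤
      2 * Real.exp (16 * (1 - Real.cos θ) * ∑ i, (m i : ℝ) * (q i * (1 - q i))) *
        Real.exp (-T) := by
  set γ : ℝ := 1 - Real.cos θ with hγdef
  have hγ : 0 ≤ γ := by linarith [Real.cos_le_one θ]
  set u : ℂ := -(Real.sin θ * Complex.I) with hu
  have hem : Complex.exp (-(θ * Complex.I)) = 1 + (-(γ : ℂ) + u) := by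
    rw [← neg_mul, Complex.exp_mul_I, hu, hγdef]
    simp
    ring
  have hep : Complex.exp (θ * Complex.I) = 1 + (-(γ : ℂ) + -u) := by
    rw [Complex.exp_mul_I, hu, hγdef]
    simp
    ring
  -- the signed imaginary part: `v i = ± u`
  set v : Fin k → ℂ := fun i => if small i then u else -u with hv
  have hvn : ∀ i, ‖-(γ : ℂ) + v i‖ ^ 2 = 2 * γ := by
    intro i
    have : ∀ s : ℝ, s ^ 2 = Real.sin θ ^ 2 → ‖-(γ : ℂ) + -(s * Complex.I)‖ ^ 2 = 2 * γ := by
      intro s hs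
      rw [← Complex.normSq_eq_norm_sq, Complex.normSq_apply]
      simp
      rw [hγdef]
      nlinarith [Real.sin_sq_add_cos_sq θ]
    by_cases h : small i
    · simp only [hv, if_pos h, hu]
      exact this _ rfl
    · simp only [hv, if_neg h, hu]
      have := this (-Real.sin θ) (by ring)
      simpa using this
  set ρ : Fin k → MvPolynomial (Fin k) ℝ := fun i =>
    if small i then MvPolynomial.X i else 1 - MvPolynomial.X i with hρ
  have hρd : ∀ i, (ρ i).totalDegree ≤ 1 := by
    intro i
    simp only [hρ]
    split_ifs
    · simp
    · refine (MvPolynomial.totalDegree_sub _ _).trans ?_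
      simp
  set F : Fin k → (Fin k → ℝ) → ℂ → ℂ := fun i q w =>
    (1 + w * (((MvPolynomial.eval q (ρ i) : ℝ) : ℂ) * (-(γ : ℂ) + v i))) *
      Complex.exp (w * (((MvPolynomial.eval q (ρ i) : ℝ) : ℂ) * (-v i))) with hF
  have hlin : ∀ i (z : ℂ), PolyFn 1 fun q => ((MvPolynomial.eval q (ρ i) : ℝ) : ℂ) * z :=
    fun i z => (PolyFn.ofReal (hρd i)).mul (PolyFn.const 0 z)
  obtain ⟨c, hc⟩ := hasPolySeries_prod (Finset.univ : Finset (Σ i : Fin k, Fin (m i)))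
    (F := fun x => F x.1) fun x _ =>
      ⟨_, (hasPolySeries_one_add (hlin x.1 _)).mul (hasPolySeries_exp (hlin x.1 _))⟩
  set κ : Fin k → ℂ := fun i => if small i then 1 else Complex.exp (-(θ * Complex.I + u)) with hκ
  set U : ℂ := Complex.exp (u * μ) * ∏ x : (Σ i : Fin k, Fin (m i)), κ x.1 with hU
  have hUn : ‖U‖ = 1 := by
    rw [hU, norm_mul, norm_prod]
    have h1 : ‖Complex.exp (u * μ)‖ = 1 := by
      rw [Complex.norm_exp]; simp [hu]
    rw [h1, one_mul]
    refine Finset.prod_eq_one fun x _ => ?_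
    simp only [hκ]
    split_ifs
    · simp
    · rw [Complex.norm_exp]; simp [hu]
  have hsig : ∀ f : Fin k → ℝ,
      ∑ x : (Σ i : Fin k, Fin (m i)), f x.1 = ∑ i, (m i : ℝ) * f i := by
    intro f
    rw [Fintype.sum_sigma]
    simp
  refine ⟨fun q => U * ∑ N ∈ Finset.range T, c N q, ?_, ?_⟩
  · refine ((PolyFn.const 0 U).mul (d' := T) (PolyFn.sum _ fun N hN => ?_)).mono (by simp)
    exact (hc.1 N).mono (Finset.mem_range.1 hN).le
  intro q hq hsm hla hmean
  have hr : ∀ i, 0 ≤ MvPolynomial.eval q (ρ i) ∧ MvPolynomial.eval q (ρ i) ≤ 1 / 2 ∧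
      MvPolynomial.eval q (ρ i) * (1 - MvPolynomial.eval q (ρ i)) = q i * (1 - q i) := by
    intro i
    obtain ⟨h0, h1⟩ := hq i
    by_cases h : small i
    · simp only [hρ, if_pos h, MvPolynomial.eval_X]
      exact ⟨h0, hsm i h, trivial⟩
    · simp only [hρ, if_neg h, map_sub, map_one, MvPolynomial.eval_X]
      exact ⟨by linarith, by linarith [hla i h], by ring⟩
  have hfac : ∀ i, (1 + (q i : ℂ) * (Complex.exp (-(θ * Complex.I)) - 1)) =
      Complex.exp (u * q i) * κ i * F i q 1 := by
    intro i
    by_cases h : small i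
    · simp only [hρ, hκ, hF, hv, if_pos h, MvPolynomial.eval_X, hem, mul_one, one_mul]
      rw [mul_left_comm, ← Complex.exp_add]
      have : u * (q i : ℂ) + (q i : ℂ) * -u = 0 := by ring
      rw [this, Complex.exp_zero]
      ring
    · simp only [hρ, hκ, hF, hv, if_neg h, map_sub, map_one, MvPolynomial.eval_X, one_mul]
      rw [mul_left_comm, ← Complex.exp_add, ← Complex.exp_add]
      have : u * (q i : ℂ) + -(θ * Complex.I + u) + ((1 - q i : ℝ) : ℂ) * -(-u) =
          -(θ * Complex.I) := by push_cast; ring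
      rw [this, hem]
      push_cast
      have h0 : (1 + (-(γ : ℂ) + u)) * (1 + (-(γ : ℂ) + -u)) = 1 := by
        rw [← hem, ← hep, ← Complex.exp_add]; simp
      linear_combination (-(1 - (q i : ℂ))) * h0
  have hprod : ∏ x : (Σ i : Fin k, Fin (m i)),
      (1 + (q x.1 : ℂ) * (Complex.exp (-(θ * Complex.I)) - 1)) =
      U * ∏ x : (Σ i : Fin k, Fin (m i)), F x.1 q 1 := by
    simp_rw [hfac]
    rw [Finset.prod_mul_distrib, Finset.prod_mul_distrib, ← Complex.exp_sum, ← Finset.mul_sum,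
      hU]
    have h1 := hsig q
    rw [hmean] at h1
    rw [← h1]
    push_cast
    rfl
  show ‖_ - U * _‖ ≤ _
  rw [hprod, ← mul_sub, norm_mul, hUn, one_mul]
  refine hc.trunc q (fun w hw => ?_) T
  rw [norm_prod, ← hsig fun i => q i * (1 - q i), Finset.mul_sum, Real.exp_sum]
  refine Finset.prod_le_prod (fun _ _ => norm_nonneg _) fun x _ => ?_
  obtain ⟨h0, h1, h2⟩ := hr x.1
  rw [← h2]
  exact factor_bound h0 h1 hγ (hvn x.1) hw

/-! ### Undamped frequencies and total variation distance -/

/-- Only `O(log (1/ε))` frequencies modulo `M` are not damped: here `L` stands for `log (1/ε)`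
and `V` for the variance. -/
lemma card_freq_le {V L : ℝ} (hL : 0.69 < L) {M : ℕ} (hM0 : 0 < M)
    (hM : (M : ℝ) ≤ 16 * Real.sqrt (L * max V L) + 1) :
    (((Finset.range M).filter
      (fun ξ : ℕ => V * (1 - Real.cos (2 * Real.pi * ξ / M)) ≤ 20 * L)).card : ℝ) ≤ 65 * L := by
  have hMr : (0 : ℝ) < M := by exact_mod_cast hM0
  have hpi := Real.pi_pos
  have key : ∀ x : ℝ, 0 ≤ x → 2 * x ≤ M →
      V * (1 - Real.cos (2 * Real.pi * x / M)) ≤ 20 * L → x ≤ 31 * L := by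
    intro x hx0 hxM hx
    rcases le_or_gt V L with hVL | hVL
    · rw [max_eq_right hVL, Real.sqrt_mul_self (by linarith)] at hM
      linarith
    · rw [max_eq_left hVL.le] at hM
      have hV0 : 0 < V := by linarith
      set s := Real.sqrt (L * V) with hs
      have hs2 : s ^ 2 = L * V := Real.sq_sqrt (by nlinarith)
      have hs0 : 0 ≤ s := Real.sqrt_nonneg _
      have hsL : L ≤ s := Real.le_sqrt_of_sq_le (by nlinarith)
      have hM18 : (M : ℝ) ≤ 18 * s := by linarith
      have hcos := Real.cos_le_one_sub_mul_cos_sq (x := 2 * Real.pi * x / M) (by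
        rw [abs_of_nonneg (by positivity), div_le_iff₀ hMr]
        nlinarith)
      have h8 : 2 / Real.pi ^ 2 * (2 * Real.pi * x / M) ^ 2 = 8 * x ^ 2 / M ^ 2 := by
        field_simp
        ring
      rw [h8] at hcos
      have h9 : V * (8 * x ^ 2 / M ^ 2) ≤ 20 * L :=
        le_trans (mul_le_mul_of_nonneg_left (by linarith) hV0.le) hx
      have h10 : V * (8 * x ^ 2) ≤ 20 * L * M ^ 2 := by
        rw [← mul_div_assoc, div_le_iff₀ (by positivity)] at h9
        exact h9
      have h11 : (M : ℝ) ^ 2 ≤ 324 * (L * V) := by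
        rw [← hs2]; nlinarith
      have h12 : V * (8 * x ^ 2) ≤ V * (6480 * L ^ 2) := by
        refine h10.trans ?_
        have := mul_le_mul_of_nonneg_left h11 (by linarith : 0 ≤ 20 * L)
        linarith
      have h13 := le_of_mul_le_mul_left h12 hV0
      exact abs_le_of_sq_le_sq' (by nlinarith) (by linarith) |>.2
  set J := ⌊31 * L⌋₊ with hJ
  have hsub : (Finset.range M).filter
      (fun ξ : ℕ => V * (1 - Real.cos (2 * Real.pi * ξ / M)) ≤ 20 * L) ⊆
      Finset.range (J + 1) ∪ (Finset.range (J + 1)).image (fun j => M - j) := by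
    intro ξ hξ
    rw [Finset.mem_filter, Finset.mem_range] at hξ
    obtain ⟨hlt, hξ⟩ := hξ
    rw [Finset.mem_union, Finset.mem_image]
    rcases le_total (2 * ξ) M with h | h
    · left
      have := key ξ (by positivity) (by exact_mod_cast h) hξ
      have := Nat.le_floor this
      simp only [Finset.mem_range]
      omega
    · right
      have hc : ((M - ξ : ℕ) : ℝ) = M - ξ := by push_cast [hlt.le]; ring
      have h2 : (2 * ξ : ℝ) ≥ M := by exact_mod_cast h
      have := key ((M - ξ : ℕ) : ℝ) (by positivity) (by rw [hc]; linarith) (by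
        have : 2 * Real.pi * ((M - ξ : ℕ) : ℝ) / M = 2 * Real.pi - 2 * Real.pi * ξ / M := by
          rw [hc]; field_simp
        rw [this, Real.cos_two_pi_sub]
        exact hξ)
      have := Nat.le_floor this
      refine ⟨M - ξ, ?_, by omega⟩
      simp only [Finset.mem_range]
      omega
  have hcard := (Finset.card_le_card hsub).trans (Finset.card_union_le _ _)
  have hcard2 := hcard.trans (add_le_add le_rfl Finset.card_image_le)
  rw [Finset.card_range] at hcard2
  have hJL : (J : ℝ) ≤ 31 * L := Nat.floor_le (by linarith)
  have : (((Finset.range M).filter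
      (fun ξ : ℕ => V * (1 - Real.cos (2 * Real.pi * ξ / M)) ≤ 20 * L)).card : ℝ) ≤
      ((J + 1 + (J + 1) : ℕ) : ℝ) := by exact_mod_cast hcard2
  push_cast at this
  linarith

/-- The characteristic function of the PBD with parameters `p` at the angle `θ`. -/
noncomputable def pbdChar {ι : Type*} [Fintype ι] (p : ι → ℝ) (θ : ℝ) : ℂ :=
  ∏ i, (1 + (p i : ℂ) * (Complex.exp (-(θ * Complex.I)) - 1))

/-- The undamped frequencies control the `ℓ¹` distance of two PBDs with equal means and
comparable variances. -/
lemma sum_abs_sub_le {ι κ : Type*} [Fintype ι] [DecidableEq ι] [Fintype κ] [DecidableEq κ]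
    {p : ι → ℝ} {q : κ → ℝ} (hp : ∀ i, p i ∈ Set.Icc (0 : ℝ) 1)
    (hq : ∀ i, q i ∈ Set.Icc (0 : ℝ) 1) (hmean : pbdMean q = pbdMean p)
    (hv1 : pbdVar p / 2 ≤ pbdVar q) (hv2 : pbdVar q ≤ pbdVar p)
    {N : ℕ} (hNp : Fintype.card ι < N) (hNq : Fintype.card κ < N) {L : ℝ} (hL : 0 < L)
    {M : ℕ} (hM : 16 * Real.sqrt (L * max (pbdVar p) L) < M) :
    ∑ j ∈ Finset.range N, |pbdPmf p j - pbdPmf q j| ≤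
      ∑ ξ ∈ (Finset.range M).filter
        (fun ξ : ℕ => pbdVar p * (1 - Real.cos (2 * Real.pi * ξ / M)) ≤ 20 * L),
        ‖pbdChar p (2 * Real.pi * ξ / M) - pbdChar q (2 * Real.pi * ξ / M)‖ +
      2 * M * Real.exp (-(10 * L)) + 8 * Real.exp (-(7 * L)) := by
  set V := pbdVar p with hV
  set v := max V L with hv
  have hv0 : 0 < v := lt_of_lt_of_le hL (le_max_right _ _)
  set s := Real.sqrt (L * v) with hs
  have hs0 : 0 < s := Real.sqrt_pos.2 (by positivity)
  have hs2 : s ^ 2 = L * v := Real.sq_sqrt (by positivity)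
  have hM0 : 0 < M := by
    have : (0 : ℝ) < M := lt_trans (by positivity) hM
    exact_mod_cast this
  -- the Chernoff parameter is `t = √(L / v) = L / s`
  have ht1 : L / s ≤ 1 := by
    rw [div_le_one hs0]
    refine Real.le_sqrt_of_sq_le ?_
    have := le_max_right V L
    nlinarith
  have hexp : ∀ V', V' ≤ V → (L / s) ^ 2 * V' - L / s * (8 * s) ≤ -(7 * L) := by
    intro V' hV'
    have h1 : (L / s) ^ 2 * V' ≤ L := by
      rw [div_pow, hs2, div_mul_eq_mul_div, div_le_iff₀ (by positivity)]
      have h3 : V' ≤ v := hV'.trans (le_max_left _ _)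
      have := mul_le_mul_of_nonneg_left h3 (sq_nonneg L)
      nlinarith
    have h2 : L / s * (8 * s) = 8 * L := by field_simp
    linarith
  have hinv := sum_abs_le_dft (fun j => pbdPmf p j - pbdPmf q j) N hM0 (μ := pbdMean p)
    (a := 8 * s) (by linarith)
  have hF : ∀ ξ : ℕ, ∑ j ∈ Finset.range N, ((pbdPmf p j - pbdPmf q j : ℝ) : ℂ) *
        Complex.exp (-((2 * Real.pi * ξ / M : ℝ) * Complex.I)) ^ j =
      pbdChar p (2 * Real.pi * ξ / M) - pbdChar q (2 * Real.pi * ξ / M) := by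
    intro ξ
    unfold pbdChar
    rw [← pbd_pgf p hNp, ← pbd_pgf q hNq, ← Finset.sum_sub_distrib]
    refine Finset.sum_congr rfl fun j _ => ?_
    rw [Complex.ofReal_sub, sub_mul]
  simp only [hF] at hinv
  have htail : ∑ j ∈ (Finset.range N).filter (fun j : ℕ => ¬ |(j : ℝ) - pbdMean p| < 8 * s),
      |pbdPmf p j - pbdPmf q j| ≤ 4 * Real.exp (-(7 * L)) := by
    have h1 := pbd_tail hp hNp (t := L / s) (a := 8 * s) (by positivity) ht1
    have h2 := pbd_tail hq hNq (t := L / s) (a := 8 * s) (by positivity) ht1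
    rw [hmean] at h2
    have h3 := Real.exp_le_exp.2 (hexp _ le_rfl)
    have h4 := Real.exp_le_exp.2 (hexp _ hv2)
    have h5 : ∑ j ∈ (Finset.range N).filter (fun j : ℕ => ¬ |(j : ℝ) - pbdMean p| < 8 * s),
        |pbdPmf p j - pbdPmf q j| ≤
        ∑ j ∈ (Finset.range N).filter (fun j : ℕ => ¬ |(j : ℝ) - pbdMean p| < 8 * s),
          (pbdPmf p j + pbdPmf q j) := by
      refine Finset.sum_le_sum fun j _ => ?_
      have := pbdPmf_nonneg hp j
      have := pbdPmf_nonneg hq j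
      rw [abs_le]
      constructor <;> linarith
    rw [Finset.sum_add_distrib] at h5
    linarith
  have hout : ∑ ξ ∈ (Finset.range M).filter
        (fun ξ : ℕ => ¬ V * (1 - Real.cos (2 * Real.pi * ξ / M)) ≤ 20 * L),
        ‖pbdChar p (2 * Real.pi * ξ / M) - pbdChar q (2 * Real.pi * ξ / M)‖ ≤
      2 * M * Real.exp (-(10 * L)) := by
    have h1 : ∀ ξ ∈ (Finset.range M).filter
        (fun ξ : ℕ => ¬ V * (1 - Real.cos (2 * Real.pi * ξ / M)) ≤ 20 * L),
        ‖pbdChar p (2 * Real.pi * ξ / M) - pbdChar q (2 * Real.pi * ξ / M)‖ ≤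
        2 * Real.exp (-(10 * L)) := by
      intro ξ hξ
      have hξ2 := not_le.1 (Finset.mem_filter.1 hξ).2
      have hc : 0 ≤ 1 - Real.cos (2 * Real.pi * ξ / M) := by
        linarith [Real.cos_le_one (2 * Real.pi * ξ / M)]
      have h1 := pbd_char_decay p (2 * Real.pi * ξ / M)
      have h2 := pbd_char_decay q (2 * Real.pi * ξ / M)
      have h3 : Real.exp (-(pbdVar p * (1 - Real.cos (2 * Real.pi * ξ / M)))) ≤
          Real.exp (-(10 * L)) := Real.exp_le_exp.2 (by linarith)
      have h4 : Real.exp (-(pbdVar q * (1 - Real.cos (2 * Real.pi * ξ / M)))) ≤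
          Real.exp (-(10 * L)) := Real.exp_le_exp.2 (by nlinarith)
      have h5 := norm_sub_le (pbdChar p (2 * Real.pi * ξ / M)) (pbdChar q (2 * Real.pi * ξ / M))
      have h6 : ‖pbdChar p (2 * Real.pi * ξ / M)‖ ≤ _ := h1
      have h7 : ‖pbdChar q (2 * Real.pi * ξ / M)‖ ≤ _ := h2
      linarith
    refine (Finset.sum_le_card_nsmul _ _ _ h1).trans ?_
    rw [nsmul_eq_mul]
    have h2 : ((((Finset.range M).filter
        (fun ξ : ℕ => ¬ V * (1 - Real.cos (2 * Real.pi * ξ / M)) ≤ 20 * L)).card : ℕ) : ℝ) ≤ M := by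
      have := Finset.card_filter_le (Finset.range M)
        (fun ξ : ℕ => ¬ V * (1 - Real.cos (2 * Real.pi * ξ / M)) ≤ 20 * L)
      rw [Finset.card_range] at this
      exact_mod_cast this
    have h3 := Real.exp_pos (-(10 * L))
    nlinarith
  rw [← Finset.sum_filter_add_sum_filter_not (Finset.range M)
    (fun ξ : ℕ => V * (1 - Real.cos (2 * Real.pi * ξ / M)) ≤ 20 * L)] at hinv
  linarith

lemma dTV_pbd {ι κ : Type*} [Fintype ι] [DecidableEq ι] [Fintype κ] [DecidableEq κ]
    (p : ι → ℝ) (q : κ → ℝ) {N : ℕ} (hNp : Fintype.card ι < N) (hNq : Fintype.card κ < N) :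
    dTV (pbdPmf p) (pbdPmf q) =
      (1 / 2) * ∑ j ∈ Finset.range N, |pbdPmf p j - pbdPmf q j| := by
  unfold dTV
  rw [tsum_eq_sum (s := Finset.range N)]
  intro j hj
  have : N ≤ j := by simpa using hj
  rw [pbdPmf_eq_zero p (by omega), pbdPmf_eq_zero q (by omega)]
  simp

lemma norm_pbdChar_sub_le {ι κ : Type*} [Fintype ι] [DecidableEq ι] [Fintype κ] [DecidableEq κ]
    (p : ι → ℝ) (q : κ → ℝ) (θ : ℝ) :
    ‖pbdChar p θ - pbdChar q θ‖ ≤ 2 * dTV (pbdPmf p) (pbdPmf q) := by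
  have hp : Fintype.card ι < Fintype.card ι + Fintype.card κ + 1 := by omega
  have hq : Fintype.card κ < Fintype.card ι + Fintype.card κ + 1 := by omega
  unfold pbdChar
  rw [← pbd_pgf p hp, ← pbd_pgf q hq, ← Finset.sum_sub_distrib, dTV_pbd p q hp hq, ← mul_assoc]
  norm_num only [one_mul]
  refine (norm_sum_le _ _).trans (Finset.sum_le_sum fun j _ => ?_)
  rw [← sub_mul, norm_mul, norm_pow, ← Complex.ofReal_sub, Complex.norm_real, Complex.norm_exp]
  simp

/-! ### The polynomial system -/

/-- The polynomial system for a region where each parameter lies on a known side of `1/2`: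
equality of means and the two variance inequalities (four polynomials), and one polynomial
bounding the sum over the undamped frequencies of the squared differences between the
characteristic function of `P` and the truncated one of `Q`. -/
lemma exists_system {ε : ℝ} (hε0 : 0 < ε) (hε : ε < 1 / 2) {n : ℕ} {p : Fin n → ℝ}
    (hp : ∀ i, p i ∈ Set.Icc (0 : ℝ) 1) (hV : pbdVar p ≤ ε⁻¹) {k : ℕ} (m : Fin k → ℕ)
    (small : Fin k → Prop) :
    ∃ G : Fin 5 → MvPolynomial (Fin k) ℝ,
      (∀ j, ((G j).totalDegree : ℝ) ≤ 10000 * Real.log (1 / ε)) ∧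
      ∀ q : Fin k → ℝ, (∀ i, q i ∈ Set.Icc (0 : ℝ) 1) → (∀ i, small i → q i ≤ 1 / 2) →
        (∀ i, ¬ small i → 1 / 2 ≤ q i) →
        ((10000 * Real.log (1 / ε) * dTV (pbdPmf p) (pbdPmfMult m q) ≤ ε →
          (∑ i, (m i : ℝ) * q i) = pbdMean p →
          pbdVar p / 2 ≤ (∑ i, (m i : ℝ) * (q i * (1 - q i))) →
          (∑ i, (m i : ℝ) * (q i * (1 - q i))) ≤ pbdVar p →
          ∀ j, 0 ≤ MvPolynomial.eval q (G j)) ∧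
        ((∀ j, 0 ≤ MvPolynomial.eval q (G j)) →
          dTV (pbdPmf p) (pbdPmfMult m q) < ε / 2)) := by
  set L := Real.log (1 / ε) with hLdef
  have hL : 0.69 < L := by
    have h1 : Real.log 2 ≤ L := Real.log_le_log (by norm_num) (by
      rw [le_div_iff₀ hε0]; linarith)
    linarith [Real.log_two_gt_d9]
  have hL0 : 0 < L := by linarith
  have hexpL : Real.exp (-L) = ε := by
    rw [hLdef, one_div, Real.log_inv, neg_neg, Real.exp_log hε0]
  have hexpn : ∀ a : ℕ, Real.exp (-(a * L)) = ε ^ a := by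
    intro a
    rw [← mul_neg, Real.exp_nat_mul, hexpL]
  have hLε : L ≤ ε⁻¹ := by
    rw [hLdef, one_div]
    linarith [Real.log_le_sub_one_of_pos (inv_pos.2 hε0)]
  have hLε1 : L * ε ≤ 1 := by
    have := mul_le_mul_of_nonneg_right hLε hε0.le
    rwa [inv_mul_cancel₀ hε0.ne'] at this
  set V := pbdVar p with hVdef
  set s := Real.sqrt (L * max V L) with hs
  have hs0 : 0 ≤ s := Real.sqrt_nonneg _
  have hsε : s ≤ ε⁻¹ := by
    refine Real.sqrt_le_iff.2 ⟨by positivity, ?_⟩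
    rw [sq]
    exact mul_le_mul hLε (max_le hV hLε) (le_trans hL0.le (le_max_right _ _)) (by positivity)
  set M := ⌊16 * s⌋₊ + 1 with hMdef
  have hM1 : 16 * s < M := by
    rw [hMdef]; push_cast; exact Nat.lt_floor_add_one _
  have hM2 : (M : ℝ) ≤ 16 * s + 1 := by
    rw [hMdef]; push_cast; linarith [Nat.floor_le (by positivity : 0 ≤ 16 * s)]
  have hMε : M * ε ≤ 17 := by
    have h1 : s * ε ≤ 1 := by
      have := mul_le_mul_of_nonneg_right hsε hε0.le
      rwa [inv_mul_cancel₀ hε0.ne'] at this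
    nlinarith
  set S := (Finset.range M).filter
    (fun ξ : ℕ => V * (1 - Real.cos (2 * Real.pi * ξ / M)) ≤ 20 * L) with hS
  have hcard : (S.card : ℝ) ≤ 65 * L := card_freq_le hL (by omega) hM2
  set T := ⌈400 * L⌉₊ with hT
  have hT1 : 400 * L ≤ T := Nat.le_ceil _
  have hT2 : (T : ℝ) ≤ 400 * L + 1 := (Nat.ceil_lt_add_one (by positivity)).le
  -- polynomial approximations of the characteristic function, minus that of `P`
  choose τ hτP hτ using fun ξ : ℕ =>
    char_approx m small (2 * Real.pi * ξ / M) (pbdMean p) T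
  have hdiff : ∀ ξ : ℕ, PolyFn T fun q => τ ξ q + -pbdChar p (2 * Real.pi * ξ / M) :=
    fun ξ => (hτP ξ).add (PolyFn.const T _)
  choose A B hA hB hAB using hdiff
  beta_reduce at hAB
  set Pm : MvPolynomial (Fin k) ℝ :=
    ∑ i, MvPolynomial.C (m i : ℝ) * MvPolynomial.X i with hPm
  set Pv : MvPolynomial (Fin k) ℝ :=
    ∑ i, MvPolynomial.C (m i : ℝ) * (MvPolynomial.X i * (1 - MvPolynomial.X i)) with hPv
  set Pf : MvPolynomial (Fin k) ℝ :=
    MvPolynomial.C (S.card : ℝ) * ∑ ξ ∈ S, (A ξ ^ 2 + B ξ ^ 2) with hPf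
  have hePm : ∀ q, MvPolynomial.eval q Pm = ∑ i, (m i : ℝ) * q i := by
    intro q; simp [hPm]
  have hePv : ∀ q, MvPolynomial.eval q Pv = ∑ i, (m i : ℝ) * (q i * (1 - q i)) := by
    intro q; simp [hPv]
  have hePf : ∀ q, MvPolynomial.eval q Pf =
      S.card * ∑ ξ ∈ S, ‖τ ξ q - pbdChar p (2 * Real.pi * ξ / M)‖ ^ 2 := by
    intro q
    simp only [hPf, map_mul, MvPolynomial.eval_C, map_sum, map_add, map_pow]
    congr 1
    refine Finset.sum_congr rfl fun ξ _ => ?_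
    rw [sub_eq_add_neg, hAB ξ q, ← Complex.normSq_eq_norm_sq, Complex.normSq_add_mul_I]
  have hdPm : Pm.totalDegree ≤ 2 := by
    refine MvPolynomial.totalDegree_finsetSum_le fun i _ => ?_
    refine (MvPolynomial.totalDegree_mul _ _).trans ?_
    rw [MvPolynomial.totalDegree_C, zero_add, MvPolynomial.totalDegree_X]
    norm_num
  have hdPv : Pv.totalDegree ≤ 2 := by
    refine MvPolynomial.totalDegree_finsetSum_le fun i _ => ?_
    refine (MvPolynomial.totalDegree_mul _ _).trans ?_
    have h1 := MvPolynomial.totalDegree_mul (MvPolynomial.X i : MvPolynomial (Fin k) ℝ)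
      (1 - MvPolynomial.X i)
    have h2 := MvPolynomial.totalDegree_sub (1 : MvPolynomial (Fin k) ℝ) (MvPolynomial.X i)
    rw [MvPolynomial.totalDegree_C, zero_add]
    rw [MvPolynomial.totalDegree_X] at h1 h2
    rw [MvPolynomial.totalDegree_one] at h2
    omega
  have hdPf : Pf.totalDegree ≤ 2 * T := by
    refine (MvPolynomial.totalDegree_mul _ _).trans ?_
    rw [MvPolynomial.totalDegree_C, zero_add]
    refine MvPolynomial.totalDegree_finsetSum_le fun ξ _ => ?_
    refine (MvPolynomial.totalDegree_add _ _).trans (max_le ?_ ?_)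
    · exact (MvPolynomial.totalDegree_pow _ _).trans (Nat.mul_le_mul_left 2 (hA ξ))
    · exact (MvPolynomial.totalDegree_pow _ _).trans (Nat.mul_le_mul_left 2 (hB ξ))
  refine ⟨![Pm - MvPolynomial.C (pbdMean p), MvPolynomial.C (pbdMean p) - Pm,
    Pv - MvPolynomial.C (V / 2), MvPolynomial.C V - Pv,
    MvPolynomial.C ((ε / 8) ^ 2) - Pf], ?_, ?_⟩
  · have hC : ∀ (Q : MvPolynomial (Fin k) ℝ) (x : ℝ) (d : ℕ), Q.totalDegree ≤ d →
        (d : ℝ) ≤ 10000 * L → ((Q - MvPolynomial.C x).totalDegree : ℝ) ≤ 10000 * L ∧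
          ((MvPolynomial.C x - Q).totalDegree : ℝ) ≤ 10000 * L := by
      intro Q x d hd hdL
      have h1 := MvPolynomial.totalDegree_sub Q (MvPolynomial.C x)
      have h2 := MvPolynomial.totalDegree_sub (MvPolynomial.C x) Q
      rw [MvPolynomial.totalDegree_C] at h1 h2
      have h3 : (Q - MvPolynomial.C x).totalDegree ≤ d := by omega
      have h4 : (MvPolynomial.C x - Q).totalDegree ≤ d := by omega
      exact ⟨le_trans (by exact_mod_cast h3) hdL, le_trans (by exact_mod_cast h4) hdL⟩
    have h2L : ((2 : ℕ) : ℝ) ≤ 10000 * L := by push_cast; linarith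
    have hTL : ((2 * T : ℕ) : ℝ) ≤ 10000 * L := by push_cast; linarith
    intro j
    fin_cases j
    · exact (hC _ _ _ hdPm h2L).1
    · exact (hC _ _ _ hdPm h2L).2
    · exact (hC _ _ _ hdPv h2L).1
    · exact (hC _ _ _ hdPv h2L).2
    · exact (hC _ _ _ hdPf hTL).2
  intro q hq hsm hla
  set q' : (Σ i : Fin k, Fin (m i)) → ℝ := fun x => q x.1 with hq'
  have hsig : ∀ f : Fin k → ℝ,
      ∑ x : (Σ i : Fin k, Fin (m i)), f x.1 = ∑ i, (m i : ℝ) * f i := by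
    intro f
    rw [Fintype.sum_sigma]
    simp
  have hqmean : pbdMean q' = ∑ i, (m i : ℝ) * q i := hsig q
  have hqvar : pbdVar q' = ∑ i, (m i : ℝ) * (q i * (1 - q i)) := hsig fun i => q i * (1 - q i)
  have hdTV : dTV (pbdPmf p) (pbdPmfMult m q) = dTV (pbdPmf p) (pbdPmf q') := rfl
  -- powers of `ε < 1/2` that absorb the numerical constants
  have hpow : ∀ a : ℕ, ε ^ a ≤ (1 / 2) ^ a := fun a => pow_le_pow_left₀ hε0.le hε.le a
  have htrunc : ∑ i, (m i : ℝ) * q i = pbdMean p →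
      (∑ i, (m i : ℝ) * (q i * (1 - q i))) ≤ V → ∀ ξ ∈ S,
      ‖pbdChar q' (2 * Real.pi * ξ / M) - τ ξ q‖ ≤ 2 * ε ^ 80 := by
    intro hmean hvar ξ hξ
    refine (hτ ξ q hq hsm hla hmean).trans ?_
    have hξ2 := (Finset.mem_filter.1 hξ).2
    have hc : 0 ≤ 1 - Real.cos (2 * Real.pi * ξ / M) := by
      linarith [Real.cos_le_one (2 * Real.pi * ξ / M)]
    rw [mul_assoc, ← Real.exp_add, ← hexpn 80]
    refine mul_le_mul_of_nonneg_left (Real.exp_le_exp.2 ?_) (by norm_num)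
    have := mul_le_mul_of_nonneg_left hvar hc
    push_cast
    linarith
  have hcardτ : (S.card : ℝ) * (2 * ε ^ 80) ≤ ε / 16 := by
    have h1 : (S.card : ℝ) * (2 * ε ^ 80) ≤ 65 * L * (2 * ε ^ 80) := by gcongr
    have h2 : 65 * L * (2 * ε ^ 80) = 130 * (L * ε) * ε ^ 78 * ε := by ring
    have h3 : 130 * (L * ε) * ε ^ 78 ≤ 130 * 1 * (1 / 2) ^ 78 := by
      gcongr
    have h4 : (130 : ℝ) * 1 * (1 / 2) ^ 78 ≤ 1 / 16 := by norm_num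
    rw [h2] at h1
    nlinarith
  constructor
  · intro hclose hmean hv1 hv2 j
    fin_cases j
    · show 0 ≤ MvPolynomial.eval q (Pm - MvPolynomial.C (pbdMean p))
      simp only [map_sub, MvPolynomial.eval_C, hePm]
      linarith
    · show 0 ≤ MvPolynomial.eval q (MvPolynomial.C (pbdMean p) - Pm)
      simp only [map_sub, MvPolynomial.eval_C, hePm]
      linarith
    · show 0 ≤ MvPolynomial.eval q (Pv - MvPolynomial.C (V / 2))
      simp only [map_sub, MvPolynomial.eval_C, hePv]
      linarith
    · show 0 ≤ MvPolynomial.eval q (MvPolynomial.C V - Pv)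
      simp only [map_sub, MvPolynomial.eval_C, hePv]
      linarith
    · show 0 ≤ MvPolynomial.eval q (MvPolynomial.C ((ε / 8) ^ 2) - Pf)
      simp only [map_sub, MvPolynomial.eval_C, hePf]
      set δ := dTV (pbdPmf p) (pbdPmf q') with hδ
      rw [hdTV] at hclose
      have hδ0 : 0 ≤ 2 * δ := (norm_nonneg _).trans (norm_pbdChar_sub_le p q' 0)
      have hb : ∀ ξ ∈ S, ‖τ ξ q - pbdChar p (2 * Real.pi * ξ / M)‖ ^ 2 ≤
          (2 * ε ^ 80 + 2 * δ) ^ 2 := by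
        intro ξ hξ
        have h1 := htrunc hmean hv2 ξ hξ
        have h2 := norm_pbdChar_sub_le p q' (2 * Real.pi * ξ / M)
        have h3 := norm_sub_le_norm_sub_add_norm_sub (τ ξ q) (pbdChar q' (2 * Real.pi * ξ / M))
          (pbdChar p (2 * Real.pi * ξ / M))
        rw [norm_sub_rev] at h1 h2
        gcongr
        linarith
      have hsum := Finset.sum_le_card_nsmul _ _ _ hb
      rw [nsmul_eq_mul] at hsum
      have h4 : (S.card : ℝ) * (2 * ε ^ 80 + 2 * δ) ≤ ε / 8 := by
        have h5 : (S.card : ℝ) * (2 * δ) ≤ 65 * L * (2 * δ) := by gcongr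
        have h6 : 65 * L * (2 * δ) ≤ ε / 16 := by linarith
        rw [mul_add]
        linarith
      have h7 : (S.card : ℝ) *
          ∑ ξ ∈ S, ‖τ ξ q - pbdChar p (2 * Real.pi * ξ / M)‖ ^ 2 ≤
          (S.card * (2 * ε ^ 80 + 2 * δ)) ^ 2 := by
        refine (mul_le_mul_of_nonneg_left hsum (Nat.cast_nonneg _)).trans (le_of_eq ?_)
        ring
      have h8 : (S.card * (2 * ε ^ 80 + 2 * δ)) ^ 2 ≤ (ε / 8) ^ 2 := by gcongr
      linarith
  · intro hG
    have g0 : 0 ≤ MvPolynomial.eval q (Pm - MvPolynomial.C (pbdMean p)) := hG 0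
    have g1 : 0 ≤ MvPolynomial.eval q (MvPolynomial.C (pbdMean p) - Pm) := hG 1
    have g2 : 0 ≤ MvPolynomial.eval q (Pv - MvPolynomial.C (V / 2)) := hG 2
    have g3 : 0 ≤ MvPolynomial.eval q (MvPolynomial.C V - Pv) := hG 3
    have g4 : 0 ≤ MvPolynomial.eval q (MvPolynomial.C ((ε / 8) ^ 2) - Pf) := hG 4
    simp only [map_sub, MvPolynomial.eval_C, hePm, hePv, hePf] at g0 g1 g2 g3 g4
    have hmean : ∑ i, (m i : ℝ) * q i = pbdMean p := by linarith
    have hv1 : V / 2 ≤ pbdVar q' := by rw [hqvar]; linarith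
    have hv2 : pbdVar q' ≤ V := by rw [hqvar]; linarith
    have hNp : Fintype.card (Fin n) <
        Fintype.card (Fin n) + Fintype.card (Σ i : Fin k, Fin (m i)) + 1 := by omega
    have hNq : Fintype.card (Σ i : Fin k, Fin (m i)) <
        Fintype.card (Fin n) + Fintype.card (Σ i : Fin k, Fin (m i)) + 1 := by omega
    have hmain := sum_abs_sub_le hp (q := q') (fun x => hq x.1) (hqmean.trans hmean) hv1 hv2
      hNp hNq hL0 hM1
    -- Cauchy–Schwarz passes from the quadratic condition to the `ℓ¹` norm over `S`
    have hCS : ∑ ξ ∈ S, ‖τ ξ q - pbdChar p (2 * Real.pi * ξ / M)‖ ≤ ε / 8 := by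
      refine abs_le_of_sq_le_sq' ?_ (by positivity) |>.2
      refine (sq_sum_le_card_mul_sum_sq).trans ?_
      linarith
    have hsumS : ∑ ξ ∈ S,
        ‖pbdChar p (2 * Real.pi * ξ / M) - pbdChar q' (2 * Real.pi * ξ / M)‖ ≤
        ε / 8 + ε / 16 := by
      have h1 : ∀ ξ ∈ S,
          ‖pbdChar p (2 * Real.pi * ξ / M) - pbdChar q' (2 * Real.pi * ξ / M)‖ ≤
          ‖τ ξ q - pbdChar p (2 * Real.pi * ξ / M)‖ + 2 * ε ^ 80 := by
        intro ξ hξ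
        have h2 := htrunc hmean (by linarith) ξ hξ
        have h3 := norm_sub_le_norm_sub_add_norm_sub (pbdChar p (2 * Real.pi * ξ / M)) (τ ξ q)
          (pbdChar q' (2 * Real.pi * ξ / M))
        rw [norm_sub_rev] at h2
        rw [norm_sub_rev (pbdChar p (2 * Real.pi * ξ / M)) (τ ξ q)] at h3
        linarith
      refine (Finset.sum_le_sum h1).trans ?_
      rw [Finset.sum_add_distrib, Finset.sum_const, nsmul_eq_mul]
      linarith
    rw [hdTV, dTV_pbd p q' hNp hNq]
    have h10 : 2 * M * Real.exp (-(10 * L)) ≤ 34 / 256 * ε := by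
      have := hexpn 10
      push_cast at this
      rw [this]
      have h1 : 2 * M * ε ^ 10 = 2 * (M * ε) * ε ^ 8 * ε := by ring
      have h2 : 2 * (M * ε) * ε ^ 8 ≤ 2 * 17 * (1 / 2) ^ 8 := by
        gcongr
      rw [h1]
      have h3 : (2 : ℝ) * 17 * (1 / 2) ^ 8 = 34 / 256 := by norm_num
      rw [h3] at h2
      exact mul_le_mul_of_nonneg_right h2 hε0.le
    have h7 : 8 * Real.exp (-(7 * L)) ≤ 1 / 8 * ε := by
      have := hexpn 7
      push_cast at this
      rw [this]
      have h2 := hpow 6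
      have h1 : ε ^ 7 = ε ^ 6 * ε := by ring
      rw [h1]
      norm_num at h2
      nlinarith
    linarith

/-- Existence of a small system of low-degree polynomial inequalities characterizing
the PBDs with prescribed multiplicities that are close to `P`. -/
theorem polynomial_system_theorem :
    ∃ C C' C₁ : ℝ, 1 ≤ C ∧ 1 ≤ C' ∧ 1 ≤ C₁ ∧
      ∀ ε : ℝ, 0 < ε → ε < 1 / 2 →
        ∀ n : ℕ, ∀ p : Fin n → ℝ, (∀ i, p i ∈ Set.Icc (0 : ℝ) 1) →
          pbdVar p ≤ ε ^ (-C') →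
          ∀ σt : ℝ, σt ∈ Set.Icc (Real.sqrt (pbdVar p) / 2) (2 * Real.sqrt (pbdVar p) + 1) →
          ∀ μt : ℝ, |pbdMean p - μt| ≤ σt →
          ∀ M l : ℕ,
            M = ⌈C * (Real.log (1 / ε) + σt * Real.sqrt (Real.log (1 / ε)))⌉₊ →
            l = ⌈C * Real.log (1 / ε)⌉₊ →
          ∀ h : ℤ → ℂ,
            (∑ ξ ∈ Finset.Icc (-(l : ℤ)) (l : ℤ), ‖h ξ - dft (pbdPmf p) M ξ‖ ^ 2) <
              ε ^ 2 / 16 →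
          -- the partition of [0,1] from the structural theorem
          ∀ R : ℝ,
            R = (if pbdVar p = 0 then 1 / 4
                 else min (1 / 4) (Real.sqrt (Real.log (1 / ε) / pbdVar p))) →
          ∀ B : ℕ → ℝ, (∀ i : ℕ, B i = R ^ (2 ^ i)) →
          ∀ l' : ℕ, IsLeast {i : ℕ | B i ≤ ε ^ C₁} l' →
          ∀ I J : ℕ → Set ℝ,
            I 0 = Set.Icc (B 0) (1 / 2) →
            (∀ i : ℕ, i + 1 ≤ l' → I (i + 1) = Set.Ico (B (i + 1)) (B i)) →
            I (l' + 1) = Set.Ioo 0 (B l') →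
            J 0 = Set.Ioc (1 / 2) (1 - B 0) →
            (∀ i : ℕ, i + 1 ≤ l' → J (i + 1) = Set.Ioc (1 - B i) (1 - B (i + 1))) →
            J (l' + 1) = Set.Ioc (1 - B l') 1 →
          -- prescribed multiplicities and intervals
          ∀ k : ℕ, ∀ m : Fin k → ℕ, (∀ i, 0 < m i) →
          ∀ a b : Fin k → ℝ,
            (∀ i, a i ≤ b i ∧ Set.Icc (a i) (b i) ⊆ Set.Icc (0 : ℝ) 1) →
            (∀ i, (∃ j ≤ l' + 1, Set.Icc (a i) (b i) = closure (I j) ∨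
                Set.Icc (a i) (b i) = closure (J j)) ∨
              Set.Icc (a i) (b i) = Set.Icc (0 : ℝ) 0 ∨
              Set.Icc (a i) (b i) = Set.Icc (1 : ℝ) 1) →
          ∃ s : ℕ, ∃ G : Fin s → MvPolynomial (Fin k) ℝ,
            (s : ℝ) ≤ C * Real.log (1 / ε) ∧
            (∀ j : Fin s, ((G j).totalDegree : ℝ) ≤ C * Real.log (1 / ε)) ∧
            -- (i) every suitable PBD close to P gives a solution of the system
            (∀ q : Fin k → ℝ,
              (∀ i, q i ∈ Set.Icc (a i) (b i)) →
              Function.Injective q →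
              dTV (pbdPmf p) (pbdPmfMult m q) < ε / l →
              (∑ i, (m i : ℝ) * q i) = pbdMean p →
              pbdVar p / 2 ≤ (∑ i, (m i : ℝ) * (q i * (1 - q i))) →
              (∑ i, (m i : ℝ) * (q i * (1 - q i))) ≤ pbdVar p →
              ∀ j : Fin s, 0 ≤ MvPolynomial.eval q (G j)) ∧
            -- (ii) every solution of the system gives a PBD close to P
            (∀ q : Fin k → ℝ,
              (∀ i, q i ∈ Set.Icc (a i) (b i)) →
              (∀ j : Fin s, 0 ≤ MvPolynomial.eval q (G j)) →
              dTV (pbdPmf p) (pbdPmfMult m q) < ε / 2) := by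
  refine ⟨10000, 1, 1, by norm_num, le_rfl, le_rfl, ?_⟩
  intro ε hε0 hε n p hp hV σt _ μt _ M l _ hl h _ R hR B hB l' _ I J hI0 hI hIl hJ0 hJ hJl
    k m _ a b hab hcl
  have hV' : pbdVar p ≤ ε⁻¹ := by rwa [Real.rpow_neg_one] at hV
  have hR0 : 0 ≤ R := by
    rw [hR]
    split_ifs
    · norm_num
    · exact le_min (by norm_num) (Real.sqrt_nonneg _)
  have hR1 : R ≤ 1 / 4 := by
    rw [hR]
    split_ifs
    · exact le_rfl
    · exact min_le_left _ _
  have hB0 : ∀ i, 0 ≤ B i := fun i => by rw [hB]; positivity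
  have hB1 : ∀ i, B i ≤ 1 / 4 := fun i => by
    rw [hB]
    exact (pow_le_of_le_one hR0 (by linarith) (by positivity)).trans hR1
  have hIs : ∀ j ≤ l' + 1, closure (I j) ⊆ Set.Icc 0 (1 / 2) := by
    intro j hj
    refine closure_minimal ?_ isClosed_Icc
    rcases j with _ | j
    · rw [hI0]
      exact Set.Icc_subset_Icc (hB0 0) le_rfl
    · rcases Nat.lt_or_ge j l' with hlt | hge
      · rw [hI j hlt]
        intro x hx
        exact ⟨(hB0 _).trans hx.1, by linarith [hx.2, hB1 j]⟩
      · obtain rfl : j = l' := by omega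
        rw [hIl]
        intro x hx
        exact ⟨hx.1.le, by linarith [hx.2, hB1 j]⟩
  have hJs : ∀ j ≤ l' + 1, closure (J j) ⊆ Set.Icc (1 / 2) 1 := by
    intro j hj
    refine closure_minimal ?_ isClosed_Icc
    rcases j with _ | j
    · rw [hJ0]
      intro x hx
      exact ⟨hx.1.le, by linarith [hx.2, hB0 0]⟩
    · rcases Nat.lt_or_ge j l' with hlt | hge
      · rw [hJ j hlt]
        intro x hx
        exact ⟨by linarith [hx.1, hB1 j], by linarith [hx.2, hB0 (j + 1)]⟩
      · obtain rfl : j = l' := by omega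
        rw [hJl]
        intro x hx
        exact ⟨by linarith [hx.1, hB1 j], hx.2⟩
  -- every interval of the partition lies on one side of `1/2`
  have hside : ∀ i, Set.Icc (a i) (b i) ⊆ Set.Icc 0 (1 / 2) ∨
      Set.Icc (a i) (b i) ⊆ Set.Icc (1 / 2) 1 := by
    intro i
    rcases hcl i with ⟨j, hj, h1 | h1⟩ | h1 | h1
    · exact Or.inl (h1 ▸ hIs j hj)
    · exact Or.inr (h1 ▸ hJs j hj)
    · exact Or.inl (h1 ▸ Set.Icc_subset_Icc le_rfl (by norm_num))
    · exact Or.inr (h1 ▸ Set.Icc_subset_Icc (by norm_num) le_rfl)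
  obtain ⟨G, hGd, hG⟩ := exists_system hε0 hε hp hV' m
    (fun i => Set.Icc (a i) (b i) ⊆ Set.Icc 0 (1 / 2))
  have hbox : ∀ q : Fin k → ℝ, (∀ i, q i ∈ Set.Icc (a i) (b i)) →
      (∀ i, q i ∈ Set.Icc (0 : ℝ) 1) ∧
      (∀ i, Set.Icc (a i) (b i) ⊆ Set.Icc 0 (1 / 2) → q i ≤ 1 / 2) ∧
      (∀ i, ¬ Set.Icc (a i) (b i) ⊆ Set.Icc 0 (1 / 2) → 1 / 2 ≤ q i) := fun q hq =>
    ⟨fun i => (hab i).2 (hq i), fun i hi => (hi (hq i)).2,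
      fun i hi => (((hside i).resolve_left hi) (hq i)).1⟩
  have hL : Real.log 2 ≤ Real.log (1 / ε) := Real.log_le_log (by norm_num) (by
    rw [le_div_iff₀ hε0]; linarith)
  have hL2 := Real.log_two_gt_d9
  refine ⟨5, G, by push_cast; linarith, hGd, ?_, ?_⟩
  · intro q hq _ hd hmean hv1 hv2
    obtain ⟨h1, h2, h3⟩ := hbox q hq
    refine (hG q h1 h2 h3).1 ?_ hmean hv1 hv2
    have hl1 : 10000 * Real.log (1 / ε) ≤ l := by rw [hl]; exact Nat.le_ceil _
    have hl0 : (0 : ℝ) < l := by linarith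
    have hd0 : 0 ≤ dTV (pbdPmf p) (pbdPmfMult m q) := by
      unfold dTV
      exact mul_nonneg (by norm_num) (tsum_nonneg fun _ => abs_nonneg _)
    rw [lt_div_iff₀ hl0] at hd
    nlinarith
  · intro q hq hGq
    obtain ⟨h1, h2, h3⟩ := hbox q hq
    exact (hG q h1 h2 h3).2 hGq
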